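/- arXiv:2201.01402 — 3 statements merged into one kernel-verified Lean document; each statement's English description precedes it below -/
import Mathlib

section
/- For any positive integer r ≥ 2 and integers k₂,…,k_r ≥ 1 with k_r ≥ 2, the shuffle-type identity holds: ζ_{(r,1)}((2,k₂,…,k_r);2) · ζ(2) = E₁ + 2E₂ + 2E₃ + 2A + 2B + 2C + 4D, where ζ_{(r,1)}((2,k₂,…,k_r);2) = Σ over a ≤ b₂ ≤ ⋯ ≤ b_r, a < c of 1/(a² b₂^{k₂} ⋯ b_r^{k_r} c²); E₁ = Σ over the same tableaux and m ≥ 1 of (∏ b_j^{-k_j}) / (m²(m+a)²(m+c)²); E₂ = Σ with summand (∏ b_j^{-k_j})/(m(m+a)³(m+c)²); E₃ = Σ with summand (∏ b_j^{-k_j})/(m(m+a)²(m+c)³); A, B, C, D are the hook-(r,1,1) Schur multiple zeta values with column exponents (2,2,2), (1,3,2), (1,2,3), (2,1,3) respectively and row exponents (k₂,…,k_r), i.e., A = Σ over m < a < c (column) , a ≤ b₂ ≤ ⋯ ≤ b_r of 1/(m² a² c² ∏ b_j^{k_j}), etc. -/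
open scoped BigOperators

/-- Product `∏_j b_j^{-k_j}` over the row entries `b₂ ≤ ⋯ ≤ b_r`. -/
noncomputable def rowProd {n : ℕ} (k : Fin n → ℕ) (b : Fin n → ℕ) : ℝ :=
  (∏ j, ((b j : ℝ)) ^ (k j))⁻¹

/-- Hook `(r,1)` Schur MZV with exponents `(u, k₂,…,k_r ; v)`:
`Σ_{a ≤ b₂ ≤ ⋯ ≤ b_r, a < c} a^{-u} c^{-v} ∏ b_j^{-k_j}`. -/
noncomputable def hookR1 {n : ℕ} (k : Fin n → ℕ) (u v : ℕ) : ℝ :=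
  ∑' x : {x : (ℕ × ℕ) × (Fin n → ℕ) //
      0 < x.1.1 ∧ x.1.1 < x.1.2 ∧ Monotone x.2 ∧ ∀ j, x.1.1 ≤ x.2 j},
    ((x.1.1.1 : ℝ) ^ u * (x.1.1.2 : ℝ) ^ v)⁻¹ * rowProd k x.1.2

/-- Hook `(r,1,1)` Schur MZV with column exponents `(u,v,w)` (top to bottom) and row
exponents `k`: `Σ_{m < a < c, m ≤ b₂ ≤ ⋯ ≤ b_r} m^{-u} a^{-v} c^{-w} ∏ b_j^{-k_j}`. -/
noncomputable def hookR11 {n : ℕ} (k : Fin n → ℕ) (u v w : ℕ) : ℝ :=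
  ∑' x : {x : (ℕ × ℕ × ℕ) × (Fin n → ℕ) //
      0 < x.1.1 ∧ x.1.1 < x.1.2.1 ∧ x.1.2.1 < x.1.2.2 ∧ Monotone x.2 ∧ ∀ j, x.1.1 ≤ x.2 j},
    ((x.1.1.1 : ℝ) ^ u * (x.1.1.2.1 : ℝ) ^ v * (x.1.1.2.2 : ℝ) ^ w)⁻¹ * rowProd k x.1.2

/-- Shifted ("elementary factorial") series
`Σ_{m ≥ 1, a ≤ b₂ ≤ ⋯ ≤ b_r, a < c} m^{-t} (m+a)^{-u} (m+c)^{-v} ∏ b_j^{-k_j}`. -/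
noncomputable def efR1 {n : ℕ} (k : Fin n → ℕ) (t u v : ℕ) : ℝ :=
  ∑' x : {x : (ℕ × ℕ × ℕ) × (Fin n → ℕ) //
      0 < x.1.1 ∧ 0 < x.1.2.1 ∧ x.1.2.1 < x.1.2.2 ∧ Monotone x.2 ∧ ∀ j, x.1.2.1 ≤ x.2 j},
    ((x.1.1.1 : ℝ) ^ t * ((x.1.1.1 + x.1.1.2.1 : ℕ) : ℝ) ^ u
        * ((x.1.1.1 + x.1.1.2.2 : ℕ) : ℝ) ^ v)⁻¹ * rowProd k x.1.2

/-!
The product `hookR1 k 2 2 * ζ(2)` is a sum over the tableaux `(a, c, b)` of shape `(r,1)` and all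
`m ≥ 1`. Decomposing `1 / (c² m²)` into partial fractions produces the new entry `c + m`;
decomposing `1 / (a² m)` and `1 / (a² m²)` afterwards produces `a + m`. Every resulting term has
one of the denominators `(a, c, c + m)`, `(a, a + m, c + m)`, `(m, m + a, m + c)`; the first two
are the columns of a tableau of shape `(r,1,1)`, and each such tableau arises exactly once from
`(a, c, b, m)` in either way. All series occurring converge, because in each of them the column
entries themselves form a weakly increasing sequence.
-/

section PartialFractions

variable {K : Type*} [Field K] {x y : K}

theorem inv_mul_inv_eq_partial_fractions (hx : x ≠ 0) (hy : y ≠ 0) (hxy : x + y ≠ 0) :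
    x⁻¹ * y⁻¹ = (x + y)⁻¹ * (x⁻¹ + y⁻¹) := by
  field_simp
  ring

theorem inv_sq_mul_inv_eq_partial_fractions (hx : x ≠ 0) (hy : y ≠ 0) (hxy : x + y ≠ 0) :
    (x ^ 2)⁻¹ * y⁻¹ = (x + y)⁻¹ * (x ^ 2)⁻¹ + ((x + y) ^ 2)⁻¹ * (x⁻¹ + y⁻¹) := by
  simp only [← inv_pow]
  linear_combination (x⁻¹ + (x + y)⁻¹) * inv_mul_inv_eq_partial_fractions hx hy hxy

theorem inv_sq_mul_inv_sq_eq_partial_fractions (hx : x ≠ 0) (hy : y ≠ 0) (hxy : x + y ≠ 0) :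
    (x ^ 2)⁻¹ * (y ^ 2)⁻¹ =
      ((x + y) ^ 2)⁻¹ * ((x ^ 2)⁻¹ + (y ^ 2)⁻¹) + 2 * ((x + y) ^ 3)⁻¹ * (x⁻¹ + y⁻¹) := by
  simp only [← inv_pow]
  linear_combination (x⁻¹ * y⁻¹ + (x + y)⁻¹ * (x⁻¹ + y⁻¹) + 2 * (x + y)⁻¹ ^ 2) *
    inv_mul_inv_eq_partial_fractions hx hy hxy

theorem inv_sq_mul_inv_sq_mul_inv_sq_eq_shuffle {a c m : K} (ha : a ≠ 0) (hc : c ≠ 0)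
    (hm : m ≠ 0) (ham : a + m ≠ 0) (hcm : c + m ≠ 0) :
    (a ^ 2)⁻¹ * (c ^ 2)⁻¹ * (m ^ 2)⁻¹ =
      (m ^ 2 * (m + a) ^ 2 * (m + c) ^ 2)⁻¹
        + 2 * (m * (m + a) ^ 3 * (m + c) ^ 2)⁻¹
        + 2 * (m * (m + a) ^ 2 * (m + c) ^ 3)⁻¹
        + ((a ^ 2 * c ^ 2 * (c + m) ^ 2)⁻¹ + (a ^ 2 * (a + m) ^ 2 * (c + m) ^ 2)⁻¹)
        + 2 * (a * (a + m) ^ 3 * (c + m) ^ 2)⁻¹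
        + 2 * (a * (a + m) ^ 2 * (c + m) ^ 3)⁻¹
        + 2 * ((a ^ 2 * c * (c + m) ^ 3)⁻¹ + (a ^ 2 * (a + m) * (c + m) ^ 3)⁻¹) := by
  rw [add_comm m a, add_comm m c]
  simp only [mul_inv]
  linear_combination (a ^ 2)⁻¹ * inv_sq_mul_inv_sq_eq_partial_fractions hc hm hcm
    + ((c + m) ^ 2)⁻¹ * inv_sq_mul_inv_sq_eq_partial_fractions ha hm ham
    + 2 * ((c + m) ^ 3)⁻¹ * inv_sq_mul_inv_eq_partial_fractions ha hm ham

end PartialFractions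

section Rows

theorem summable_pi_prod_of_nonneg {α : Type*} {n : ℕ} {f : Fin n → α → ℝ} (h0 : ∀ i, 0 ≤ f i)
    (hf : ∀ i, Summable (f i)) : Summable fun b : Fin n → α => ∏ i, f i (b i) := by
  induction n with
  | zero => exact Summable.of_finite
  | succ n ih =>
    rw [← (Fin.consEquiv fun _ : Fin (n + 1) => α).summable_iff]
    have htail := ih (fun i => h0 i.succ) fun i => hf i.succ
    refine ((hf 0).mul_of_nonneg htail (h0 0) fun b =>
      Finset.prod_nonneg fun i _ => h0 i.succ (b i)).congr fun x => ?_
    simp [Fin.prod_univ_succ]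

/-- The factor `b l ^ 2` of the largest entry leaves one power of `b l` to spare, which is shared
equally among all entries. -/
theorem prod_rpow_one_add_inv_card_le_prod_pow {ι : Type*} [Fintype ι] {k : ι → ℕ} {b : ι → ℝ}
    {l : ι} (hk : ∀ i, 1 ≤ k i) (hkl : 2 ≤ k l) (hb : ∀ i, 1 ≤ b i) (hbl : ∀ i, b i ≤ b l) :
    ∏ i, b i ^ (1 + (Fintype.card ι : ℝ)⁻¹) ≤ ∏ i, b i ^ k i := by
  classical
  have : Nonempty ι := ⟨l⟩
  have hb0 : ∀ i, 0 < b i := fun i => one_pos.trans_le (hb i)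
  have hspare : ∏ i, b i ^ (Fintype.card ι : ℝ)⁻¹ ≤ b l := calc
    ∏ i, b i ^ (Fintype.card ι : ℝ)⁻¹ ≤ ∏ _i : ι, b l ^ (Fintype.card ι : ℝ)⁻¹ := by
      gcongr with i
      · exact fun i _ => Real.rpow_nonneg (hb0 i).le _
      · exact (hb0 i).le
      · exact hbl i
    _ = b l := by
      rw [Finset.prod_const, Finset.card_univ,
        Real.rpow_inv_natCast_pow (hb0 l).le Fintype.card_ne_zero]
  calc ∏ i, b i ^ (1 + (Fintype.card ι : ℝ)⁻¹)
      = (∏ i, b i) * ∏ i, b i ^ (Fintype.card ι : ℝ)⁻¹ := by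
        simp only [Real.rpow_add (hb0 _), Real.rpow_one, Finset.prod_mul_distrib]
    _ ≤ (∏ i, b i) * b l :=
        mul_le_mul_of_nonneg_left hspare (Finset.prod_nonneg fun i _ => (hb0 i).le)
    _ = ∏ i, b i ^ (1 + if l = i then 1 else 0) := by
        simp only [pow_add, pow_one, Finset.prod_mul_distrib, Finset.prod_pow_boole,
          Finset.mem_univ, if_true]
    _ ≤ ∏ i, b i ^ k i := by
        refine Finset.prod_le_prod (fun i _ => (pow_pos (hb0 i) _).le) fun i _ =>
          pow_le_pow_right₀ (hb i) ?_
        split_ifs with h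
        · exact h ▸ hkl
        · exact hk i

theorem rowProd_nonneg {n : ℕ} (k b : Fin n → ℕ) : 0 ≤ rowProd k b := by
  unfold rowProd
  positivity

/-- Weakly increasing rows of `n` positive integers, the index set of the multiple zeta-star
series `∑ b, rowProd k b`. -/
abbrev PositiveRow (n : ℕ) : Type :=
  {b : Fin n → ℕ // Monotone b ∧ ∀ j, 0 < b j}

theorem summable_rowProd {n : ℕ} {k : Fin n → ℕ} {l : Fin n} (hl : ∀ j, j ≤ l)
    (hk : ∀ j, 1 ≤ k j) (hkl : 2 ≤ k l) :
    Summable fun b : PositiveRow n => rowProd k b := by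
  have hn : (0 : ℝ) < n := Nat.cast_pos.2 l.pos
  have hfactor : Summable fun a : ℕ => ((a : ℝ) ^ (1 + (n : ℝ)⁻¹))⁻¹ :=
    Real.summable_nat_rpow_inv.2 (lt_add_of_pos_right _ (inv_pos.2 hn))
  have hprod := summable_pi_prod_of_nonneg (n := n) (fun _ a => by positivity) fun _ => hfactor
  refine Summable.of_nonneg_of_le (fun b => rowProd_nonneg k b) (fun ⟨b, hb, hpos⟩ => ?_)
    (hprod.comp_injective Subtype.val_injective)
  have hle := prod_rpow_one_add_inv_card_le_prod_pow (b := fun j => (b j : ℝ)) hk hkl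
    (fun j => Nat.one_le_cast.2 (hpos j)) fun j => Nat.cast_le.2 (hb (hl j))
  rw [Fintype.card_fin] at hle
  rw [rowProd, Function.comp_apply, Finset.prod_inv_distrib]
  exact inv_anti₀ (Finset.prod_pos fun j _ => Real.rpow_pos_of_pos (Nat.cast_pos.2 (hpos j)) _) hle

theorem summable_rowProd_mul_rowProd {α : Type*} {p n : ℕ} {k' : Fin p → ℕ} {k : Fin n → ℕ}
    {f : α → PositiveRow p × PositiveRow n} (hf : Function.Injective f)
    (hk' : Summable fun b : PositiveRow p => rowProd k' b)
    (hk : Summable fun b : PositiveRow n => rowProd k b) :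
    Summable fun x => rowProd k' (f x).1 * rowProd k (f x).2 :=
  (hk'.mul_of_nonneg hk (fun b => rowProd_nonneg k' b)
    fun b => rowProd_nonneg k b).comp_injective hf

theorem summable_rowProd_pair {u v : ℕ} (hu : 1 ≤ u) (hv : 2 ≤ v) :
    Summable fun b : PositiveRow 2 => rowProd ![u, v] b :=
  summable_rowProd (l := 1) Fin.le_last (Fin.forall_fin_two.2 ⟨hu, one_le_two.trans hv⟩) hv

theorem summable_rowProd_triple {u v w : ℕ} (hu : 1 ≤ u) (hv : 1 ≤ v) (hw : 2 ≤ w) :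
    Summable fun b : PositiveRow 3 => rowProd ![u, v, w] b :=
  summable_rowProd (l := 2) Fin.le_last
    (by simpa [Fin.forall_fin_succ] using ⟨hu, hv, one_le_two.trans hw⟩) hw

theorem rowProd_pair (u v a c : ℕ) :
    rowProd ![u, v] ![a, c] = ((a : ℝ) ^ u * (c : ℝ) ^ v)⁻¹ := by
  simp [rowProd, Fin.prod_univ_two]

theorem rowProd_triple (u v w a c e : ℕ) :
    rowProd ![u, v, w] ![a, c, e] = ((a : ℝ) ^ u * (c : ℝ) ^ v * (e : ℝ) ^ w)⁻¹ := by
  simp [rowProd, Fin.prod_univ_three]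

/-- Two weakly increasing positive integers as a row. -/
def PositiveRow.pair (a c : ℕ) (ha : 0 < a) (hac : a ≤ c) : PositiveRow 2 :=
  ⟨![a, c], by simpa [monotone_vecCons] using hac,
    Fin.forall_fin_two.2 ⟨ha, ha.trans_le hac⟩⟩

/-- Three weakly increasing positive integers as a row. -/
def PositiveRow.triple (a c e : ℕ) (ha : 0 < a) (hac : a ≤ c) (hce : c ≤ e) : PositiveRow 3 :=
  ⟨![a, c, e], by simpa [monotone_vecCons] using ⟨hac, hce⟩,
    by simpa [Fin.forall_fin_succ] using ⟨ha, ha.trans_le hac, ha.trans_le (hac.trans hce)⟩⟩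

end Rows

section Tableaux

variable {n : ℕ}

/-- Semistandard tableaux `((a, c), b)` of hook shape `(r,1)`: first row `a, b₂, …, b_r`, below `a`
the entry `c`. -/
abbrev HookR1Tableau (n : ℕ) : Type :=
  {x : (ℕ × ℕ) × (Fin n → ℕ) //
    0 < x.1.1 ∧ x.1.1 < x.1.2 ∧ Monotone x.2 ∧ ∀ j, x.1.1 ≤ x.2 j}

/-- Semistandard tableaux of hook shape `(r,1,1)`, as pairs of the first column and the rest of the
first row. -/
abbrev HookR11Tableau (n : ℕ) : Type :=
  {x : (ℕ × ℕ × ℕ) × (Fin n → ℕ) //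
    0 < x.1.1 ∧ x.1.1 < x.1.2.1 ∧ x.1.2.1 < x.1.2.2 ∧ Monotone x.2 ∧ ∀ j, x.1.1 ≤ x.2 j}

/-- The index set of `efR1`: data `((m, a, c), b)` of a tableau `((a, c), b)` of shape `(r,1)` and a
positive shift `m`. -/
abbrev ShiftedHookR1Tableau (n : ℕ) : Type :=
  {x : (ℕ × ℕ × ℕ) × (Fin n → ℕ) //
    0 < x.1.1 ∧ 0 < x.1.2.1 ∧ x.1.2.1 < x.1.2.2 ∧ Monotone x.2 ∧ ∀ j, x.1.2.1 ≤ x.2 j}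

/-- The summand of `hookR1 k u v`. -/
noncomputable def hookR1Term (k : Fin n → ℕ) (u v : ℕ) (x : HookR1Tableau n) : ℝ :=
  ((x.1.1.1 : ℝ) ^ u * (x.1.1.2 : ℝ) ^ v)⁻¹ * rowProd k x.1.2

/-- The summand of `hookR11 k u v w`. -/
noncomputable def hookR11Term (k : Fin n → ℕ) (u v w : ℕ) (x : HookR11Tableau n) : ℝ :=
  ((x.1.1.1 : ℝ) ^ u * (x.1.1.2.1 : ℝ) ^ v * (x.1.1.2.2 : ℝ) ^ w)⁻¹ * rowProd k x.1.2

/-- The summand of `efR1 k t u v`. -/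
noncomputable def efR1Term (k : Fin n → ℕ) (t u v : ℕ) (x : ShiftedHookR1Tableau n) : ℝ :=
  ((x.1.1.1 : ℝ) ^ t * ((x.1.1.1 + x.1.1.2.1 : ℕ) : ℝ) ^ u
    * ((x.1.1.1 + x.1.1.2.2 : ℕ) : ℝ) ^ v)⁻¹ * rowProd k x.1.2

theorem summable_hookR1Term {k : Fin n → ℕ} {u v : ℕ} (hu : 1 ≤ u) (hv : 2 ≤ v)
    (hk : Summable fun b : PositiveRow n => rowProd k b) : Summable (hookR1Term k u v) := by
  let toRows (x : HookR1Tableau n) : PositiveRow 2 × PositiveRow n :=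
    (.pair x.1.1.1 x.1.1.2 x.2.1 x.2.2.1.le,
      ⟨x.1.2, x.2.2.2.1, fun j => x.2.1.trans_le (x.2.2.2.2 j)⟩)
  have htoRows : Function.Injective toRows := by
    rintro ⟨⟨⟨a, c⟩, b⟩, h⟩ ⟨⟨⟨a', c'⟩, b'⟩, h'⟩ heq
    simpa [toRows, PositiveRow.pair] using heq
  exact (summable_rowProd_mul_rowProd htoRows (summable_rowProd_pair hu hv) hk).congr
    fun x => by rw [hookR1Term, ← rowProd_pair]; rfl

theorem summable_hookR11Term {k : Fin n → ℕ} {u v w : ℕ} (hu : 1 ≤ u) (hv : 1 ≤ v) (hw : 2 ≤ w)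
    (hk : Summable fun b : PositiveRow n => rowProd k b) : Summable (hookR11Term k u v w) := by
  let toRows (x : HookR11Tableau n) : PositiveRow 3 × PositiveRow n :=
    (.triple x.1.1.1 x.1.1.2.1 x.1.1.2.2 x.2.1 x.2.2.1.le x.2.2.2.1.le,
      ⟨x.1.2, x.2.2.2.2.1, fun j => x.2.1.trans_le (x.2.2.2.2.2 j)⟩)
  have htoRows : Function.Injective toRows := by
    rintro ⟨⟨⟨a, c, e⟩, b⟩, h⟩ ⟨⟨⟨a', c', e'⟩, b'⟩, h'⟩ heq
    simpa [toRows, PositiveRow.triple, and_assoc] using heq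
  exact (summable_rowProd_mul_rowProd htoRows (summable_rowProd_triple hu hv hw) hk).congr
    fun x => by rw [hookR11Term, ← rowProd_triple]; rfl

theorem summable_efR1Term {k : Fin n → ℕ} {t u v : ℕ} (ht : 1 ≤ t) (hu : 1 ≤ u) (hv : 2 ≤ v)
    (hk : Summable fun b : PositiveRow n => rowProd k b) : Summable (efR1Term k t u v) := by
  let toRows (x : ShiftedHookR1Tableau n) : PositiveRow 3 × PositiveRow n :=
    (.triple x.1.1.1 (x.1.1.1 + x.1.1.2.1) (x.1.1.1 + x.1.1.2.2) x.2.1 (Nat.le_add_right _ _)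
      (Nat.add_le_add_left x.2.2.2.1.le _),
      ⟨x.1.2, x.2.2.2.2.1, fun j => x.2.2.1.trans_le (x.2.2.2.2.2 j)⟩)
  have htoRows : Function.Injective toRows := by
    rintro ⟨⟨⟨m, a, c⟩, b⟩, h⟩ ⟨⟨⟨m', a', c'⟩, b'⟩, h'⟩ heq
    simp only [toRows, PositiveRow.triple, Prod.mk.injEq, Subtype.mk.injEq,
      Matrix.vecCons_inj] at heq ⊢
    grind
  exact (summable_rowProd_mul_rowProd htoRows (summable_rowProd_triple ht hu hv) hk).congr
    fun x => by rw [efR1Term, ← rowProd_triple]; rfl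

/-- Reads a tableau of shape `(r,1)` together with a positive integer as shifted data. -/
def HookR1Tableau.shiftEquiv (n : ℕ) :
    HookR1Tableau n × {m : ℕ // 0 < m} ≃ ShiftedHookR1Tableau n where
  toFun x := ⟨((x.2, x.1.1.1.1, x.1.1.1.2), x.1.1.2), x.2.2, x.1.2⟩
  invFun y := (⟨((y.1.1.2.1, y.1.1.2.2), y.1.2), y.2.2⟩, ⟨y.1.1.1, y.2.1⟩)
  left_inv _ := rfl
  right_inv _ := rfl

/-- Extends the column `a < c` at its end to `a < c < c + m`. -/
def HookR1Tableau.appendEquiv (n : ℕ) : HookR1Tableau n × {m : ℕ // 0 < m} ≃ HookR11Tableau n where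
  toFun x := ⟨((x.1.1.1.1, x.1.1.1.2, x.1.1.1.2 + x.2), x.1.1.2),
    x.1.2.1, x.1.2.2.1, Nat.lt_add_of_pos_right x.2.2, x.1.2.2.2⟩
  invFun y := (⟨((y.1.1.1, y.1.1.2.1), y.1.2), y.2.1, y.2.2.1, y.2.2.2.2⟩,
    ⟨y.1.1.2.2 - y.1.1.2.1, Nat.sub_pos_of_lt y.2.2.2.1⟩)
  left_inv := by
    rintro ⟨⟨⟨⟨a, c⟩, b⟩, h⟩, m, hm⟩
    simp
  right_inv := by
    rintro ⟨⟨⟨a, c, e⟩, b⟩, ha, hac, hce, h⟩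
    simpa using Nat.add_sub_cancel' hce.le

/-- Extends the column `a < c` in its middle to `a < a + m < c + m`. -/
def HookR1Tableau.insertEquiv (n : ℕ) : HookR1Tableau n × {m : ℕ // 0 < m} ≃ HookR11Tableau n where
  toFun x := ⟨((x.1.1.1.1, x.1.1.1.1 + x.2, x.1.1.1.2 + x.2), x.1.1.2),
    x.1.2.1, Nat.lt_add_of_pos_right x.2.2, Nat.add_lt_add_right x.1.2.2.1 _, x.1.2.2.2⟩
  invFun y := (⟨((y.1.1.1, y.1.1.1 + (y.1.1.2.2 - y.1.1.2.1)), y.1.2),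
      y.2.1, Nat.lt_add_of_pos_right (Nat.sub_pos_of_lt y.2.2.2.1), y.2.2.2.2⟩,
    ⟨y.1.1.2.1 - y.1.1.1, Nat.sub_pos_of_lt y.2.2.1⟩)
  left_inv := by
    rintro ⟨⟨⟨⟨a, c⟩, b⟩, ha, hac, h⟩, m, hm⟩
    simp only [Prod.mk.injEq, Subtype.mk.injEq, and_true, true_and] at hac ⊢
    omega
  right_inv := by
    rintro ⟨⟨⟨a, p, e⟩, b⟩, ha, hap, hpe, h⟩
    simp only [Prod.mk.injEq, Subtype.mk.injEq, and_true, true_and] at hap hpe ⊢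
    omega

open HookR1Tableau

theorem hasSum_efR1 {k : Fin n → ℕ}
    (hk : Summable fun b : PositiveRow n => rowProd k b) (t u v : ℕ)
    (ht : 1 ≤ t := by norm_num) (hu : 1 ≤ u := by norm_num) (hv : 2 ≤ v := by norm_num) :
    HasSum (efR1Term k t u v ∘ shiftEquiv n) (efR1 k t u v) :=
  (shiftEquiv n).hasSum_iff.2 (summable_efR1Term ht hu hv hk).hasSum

theorem hasSum_hookR11_append {k : Fin n → ℕ}
    (hk : Summable fun b : PositiveRow n => rowProd k b) (u v w : ℕ)
    (hu : 1 ≤ u := by norm_num) (hv : 1 ≤ v := by norm_num) (hw : 2 ≤ w := by norm_num) :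
    HasSum (hookR11Term k u v w ∘ appendEquiv n) (hookR11 k u v w) :=
  (appendEquiv n).hasSum_iff.2 (summable_hookR11Term hu hv hw hk).hasSum

theorem hasSum_hookR11_insert {k : Fin n → ℕ}
    (hk : Summable fun b : PositiveRow n => rowProd k b) (u v w : ℕ)
    (hu : 1 ≤ u := by norm_num) (hv : 1 ≤ v := by norm_num) (hw : 2 ≤ w := by norm_num) :
    HasSum (hookR11Term k u v w ∘ insertEquiv n) (hookR11 k u v w) :=
  (insertEquiv n).hasSum_iff.2 (summable_hookR11Term hu hv hw hk).hasSum

theorem hasSum_hookR1_mul_zeta {k : Fin n → ℕ}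
    (hk : Summable fun b : PositiveRow n => rowProd k b) (u v w : ℕ)
    (hu : 1 ≤ u := by norm_num) (hv : 2 ≤ v := by norm_num) (hw : 2 ≤ w := by norm_num) :
    HasSum (fun x : HookR1Tableau n × {m : ℕ // 0 < m} =>
        hookR1Term k u v x.1 * ((x.2 : ℝ) ^ w)⁻¹)
      (hookR1 k u v * ∑' m : {m : ℕ // 0 < m}, (((m : ℕ) : ℝ) ^ w)⁻¹) := by
  have hhook := summable_hookR1Term hu hv hk
  have hzeta : Summable fun m : {m : ℕ // 0 < m} => (((m : ℕ) : ℝ) ^ w)⁻¹ :=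
    (Real.summable_nat_pow_inv.2 hw).comp_injective Subtype.val_injective
  exact hhook.hasSum.mul hzeta.hasSum (hhook.mul_of_nonneg hzeta
    (fun x => mul_nonneg (by positivity) (rowProd_nonneg _ _)) fun m => by positivity)

theorem hookR1Term_two_two_mul_inv_sq (k : Fin n → ℕ) (x : HookR1Tableau n × {m : ℕ // 0 < m}) :
    hookR1Term k 2 2 x.1 * ((x.2 : ℝ) ^ 2)⁻¹ =
      efR1Term k 2 2 2 (shiftEquiv n x) + 2 * efR1Term k 1 3 2 (shiftEquiv n x)
        + 2 * efR1Term k 1 2 3 (shiftEquiv n x)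
        + (hookR11Term k 2 2 2 (appendEquiv n x) + hookR11Term k 2 2 2 (insertEquiv n x))
        + 2 * hookR11Term k 1 3 2 (insertEquiv n x) + 2 * hookR11Term k 1 2 3 (insertEquiv n x)
        + 2 * (hookR11Term k 2 1 3 (appendEquiv n x) + hookR11Term k 2 1 3 (insertEquiv n x)) := by
  obtain ⟨⟨⟨⟨a, c⟩, b⟩, ha, hac, -⟩, m, hm⟩ := x
  have ha' : (0 : ℝ) < a := Nat.cast_pos.2 ha
  have hc' : (0 : ℝ) < c := Nat.cast_pos.2 (ha.trans hac)
  have hm' : (0 : ℝ) < m := Nat.cast_pos.2 hm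
  simp only [hookR1Term, efR1Term, hookR11Term, shiftEquiv, appendEquiv, insertEquiv,
    Equiv.coe_fn_mk, Nat.cast_add]
  rw [mul_inv ((a : ℝ) ^ 2)]
  linear_combination rowProd k b * inv_sq_mul_inv_sq_mul_inv_sq_eq_shuffle ha'.ne' hc'.ne'
    hm'.ne' (add_pos ha' hm').ne' (add_pos hc' hm').ne'

end Tableaux

theorem shuffle_hook_r1_zeta2_general {n : ℕ} {k : Fin n → ℕ}
    (hk : Summable fun b : PositiveRow n => rowProd k b) :
    hookR1 k 2 2 * (∑' m : {m : ℕ // 0 < m}, (((m : ℕ) : ℝ) ^ 2)⁻¹) =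
      efR1 k 2 2 2 + 2 * efR1 k 1 3 2 + 2 * efR1 k 1 2 3
        + 2 * hookR11 k 2 2 2 + 2 * hookR11 k 1 3 2 + 2 * hookR11 k 1 2 3
        + 4 * hookR11 k 2 1 3 := by
  have hexpansion :=
    ((((((hasSum_efR1 hk 2 2 2).add
    ((hasSum_efR1 hk 1 3 2).mul_left 2)).add
    ((hasSum_efR1 hk 1 2 3).mul_left 2)).add
    ((hasSum_hookR11_append hk 2 2 2).add (hasSum_hookR11_insert hk 2 2 2))).add
    ((hasSum_hookR11_insert hk 1 3 2).mul_left 2)).add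
    ((hasSum_hookR11_insert hk 1 2 3).mul_left 2)).add
    (((hasSum_hookR11_append hk 2 1 3).add (hasSum_hookR11_insert hk 2 1 3)).mul_left 2)
  have hproduct := hexpansion.congr_fun (hookR1Term_two_two_mul_inv_sq k)
  rw [(hasSum_hookR1_mul_zeta hk 2 2 2).unique hproduct]
  ring

/-- Example: shuffle product `ζ_{(r,1)}((2,k₂,…,k_r);2)·ζ(2) = E₁ + 2E₂ + 2E₃ + 2A + 2B + 2C + 4D`. -/
theorem shuffle_hook_r1_zeta2 (n : ℕ) (hn : 1 ≤ n) (k : Fin n → ℕ)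
    (hk : ∀ j, 1 ≤ k j) (hlast : 2 ≤ k ⟨n - 1, by omega⟩) :
    hookR1 k 2 2 * (∑' m : {m : ℕ // 0 < m}, (((m : ℕ) : ℝ) ^ 2)⁻¹) =
      efR1 k 2 2 2 + 2 * efR1 k 1 3 2 + 2 * efR1 k 1 2 3
        + 2 * hookR11 k 2 2 2 + 2 * hookR11 k 1 3 2 + 2 * hookR11 k 1 2 3
        + 4 * hookR11 k 2 1 3 :=
  shuffle_hook_r1_zeta2_general
    (summable_rowProd (fun j => Fin.le_def.2 (Nat.le_sub_one_of_lt j.2)) hk hlast)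
end

section
/- Telescoping decomposition: Σ over m ≥ 1 and semistandard hook fillings a ≤ b, a < c of 1/(m(m+a)(m+c)² b²) [i.e., ζ_{(2,1),1}((1,2;2),(1))] equals B − 2C − D − E, where B = Σ_{m ≤ c, a < c, a ≤ b} 1/(m a c² b²)·[skew pattern: m in a detached box below-left with m ≤ c], precisely B = Σ over positive integers m, a, b, c with a ≤ b, a < c, m ≤ c of 1/(m a² c² b²) with exponent pattern (3;2) — specifically the identity ζ_{(2,1),1}((3,2;2),(1)) = ζ_{skew}((3,2;1,2)) − 2ζ_{(2,1,1)}(3,2;1;2) − ζ_{(2,1,1)}(2,2;2;2) − ζ_{(2,1,1)}(1,2;3;2) holds, where ζ_{(2,1),1}((3,2;2),(1)) = Σ_{m ≥ 1, a ≤ b, a < c} 1/(m (m+a)³ b² (m+c)²), ζ_{skew}((3,2;1,2)) = Σ_{m ≤ c, a < c, a ≤ b} 1/(m a³ b² c²) over the skew shape fillings with m ≤ c, and ζ_{(2,1,1)}(s₁;s₂;s₃ with row exponent 2) = Σ_{m₁ < m₂ < m₃, m₁ ≤ b} 1/(m₁^{s₁} b² m₂^{s₂} m₃^{s₃}). -/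
/-- `ζ_{(2,1,1)}(s₁,2;s₂;s₃) = Σ_{m₁<m₂<m₃, m₁≤b} 1/(m₁^{s₁} b² m₂^{s₂} m₃^{s₃})`. -/
noncomputable def hook211 (s₁ s₂ s₃ : ℕ) : ℝ :=
  ∑' q : {q : ℕ × ℕ × ℕ × ℕ //
      0 < q.1 ∧ q.1 < q.2.1 ∧ q.2.1 < q.2.2.1 ∧ q.1 ≤ q.2.2.2},
    ((q.1.1 : ℝ) ^ s₁ * (q.1.2.2.2 : ℝ) ^ 2 * (q.1.2.1 : ℝ) ^ s₂ * (q.1.2.2.1 : ℝ) ^ s₃)⁻¹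

/-!
For a filling `a ≤ b`, `a < c` of the hook `(2,1)` and `m ≥ 1`, the partial fraction expansion
of `1 / (m y ^ n)` in powers of `m + y` is applied twice to the series with terms
`1 / (m (m + c) a ^ s b ^ r c ^ (t - 1))`. With `y = c` the remainders are
`1 / (a ^ s b ^ r c ^ i (m + c) ^ j)`, and `a < c < m + c` is the column of a hook `(2,1,1)`; with
`y = a` they are `1 / (a ^ i b ^ r (m + a) ^ j (m + c) ^ t)`, and `a < m + a < m + c` is again such
a column. The series one starts from is the skew value, because summing over `m` telescopes:
`∑ₘ c / (m (m + c))` is the harmonic number `∑_{m ≤ c} 1 / m`.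
-/

open Filter Finset Topology

theorem hasSum_sub_succ_of_antitone {f : ℕ → ℝ} (hf : Antitone f) {l : ℝ}
    (hl : Tendsto f atTop (𝓝 l)) : HasSum (fun i ↦ f i - f (i + 1)) (f 0 - l) := by
  rw [hasSum_iff_tendsto_nat_of_nonneg fun i ↦ sub_nonneg.2 (hf i.le_succ)]
  simpa only [sum_range_sub'] using hl.const_sub (f 0)

theorem hasSum_sub_add_of_antitone {f : ℕ → ℝ} (hf : Antitone f)
    (h₀ : Tendsto f atTop (𝓝 0)) (n : ℕ) :
    HasSum (fun i ↦ f i - f (i + n)) (∑ k ∈ range n, f k) := by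
  have hstep (k : ℕ) : HasSum (fun i ↦ f (i + k) - f (i + (k + 1))) (f k) := by
    have := hasSum_sub_succ_of_antitone (f := fun i ↦ f (i + k))
      (fun i j hij ↦ hf (by gcongr)) ((tendsto_add_atTop_iff_nat k).2 h₀)
    simpa only [zero_add, sub_zero, add_right_comm, add_assoc] using this
  refine (hasSum_sum fun k (_ : k ∈ range n) ↦ hstep k).congr_fun fun i ↦ ?_
  rw [sum_range_sub' (fun k ↦ f (i + k)), add_zero]

theorem hasSum_inv_sub_inv_add (n : ℕ) :
    HasSum (fun m : ℕ+ ↦ (m : ℝ)⁻¹ - ((m : ℝ) + n)⁻¹) (∑ i ∈ range n, ((i : ℝ) + 1)⁻¹) := by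
  have hanti : Antitone fun i : ℕ ↦ ((i : ℝ) + 1)⁻¹ := fun i j hij ↦ by
    dsimp only
    gcongr
  have hlim : Tendsto (fun i : ℕ ↦ ((i : ℝ) + 1)⁻¹) atTop (𝓝 0) := by
    simpa only [one_div] using tendsto_one_div_add_atTop_nhds_zero_nat (𝕜 := ℝ)
  refine (hasSum_pnat_iff_hasSum_succ (f := fun m : ℕ ↦ (m : ℝ)⁻¹ - ((m : ℝ) + n)⁻¹)).2 ?_
  refine (hasSum_sub_add_of_antitone hanti hlim n).congr_fun fun i ↦ ?_
  push_cast
  ring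

theorem inv_mul_add_pow_add_sum {K : Type*} [Field K] {x y : K} (hx : x ≠ 0) (hy : y ≠ 0)
    (hxy : x + y ≠ 0) (n : ℕ) :
    (x * (x + y) ^ n)⁻¹ + ∑ i ∈ range n, (y ^ (n - i) * (x + y) ^ (i + 1))⁻¹ =
      (x * y ^ n)⁻¹ := by
  induction n with
  | zero => simp
  | succ n ih =>
    have hsplit : (x * (x + y) ^ (n + 1))⁻¹ + (y * (x + y) ^ (n + 1))⁻¹ =
        y⁻¹ * (x * (x + y) ^ n)⁻¹ := by
      field_simp
      ring
    have hsum : ∑ i ∈ range n, (y ^ (n + 1 - i) * (x + y) ^ (i + 1))⁻¹ =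
        y⁻¹ * ∑ i ∈ range n, (y ^ (n - i) * (x + y) ^ (i + 1))⁻¹ := by
      rw [mul_sum]
      refine sum_congr rfl fun i hi ↦ ?_
      rw [Nat.sub_add_comm (mem_range.1 hi).le, pow_succ', mul_assoc, mul_inv]
    calc
      _ = (x * (x + y) ^ (n + 1))⁻¹ + (y * (x + y) ^ (n + 1))⁻¹ +
          ∑ i ∈ range n, (y ^ (n + 1 - i) * (x + y) ^ (i + 1))⁻¹ := by
        rw [sum_range_succ, Nat.add_sub_cancel_left, pow_one]
        ring
      _ = y⁻¹ * (x * y ^ n)⁻¹ := by rw [hsplit, hsum, ← mul_add, ih]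
      _ = (x * y ^ (n + 1))⁻¹ := by rw [← mul_inv, pow_succ', mul_left_comm]

theorem hasSum_tsum_sub_sum_tsum_of_nonneg {ι κ : Type*} {s : Finset κ} {F f : ι → ℝ}
    {g : κ → ι → ℝ} (hF : Summable F) (hf : ∀ x, 0 ≤ f x) (hg : ∀ k ∈ s, ∀ x, 0 ≤ g k x)
    (hfg : ∀ x, f x + ∑ k ∈ s, g k x = F x) :
    HasSum f (∑' x, F x - ∑ k ∈ s, ∑' x, g k x) := by
  have hg_summable (k) (hk : k ∈ s) : Summable (g k) :=
    hF.of_nonneg_of_le (hg k hk) fun x ↦ by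
      linarith [hf x, hfg x, single_le_sum (fun j hj ↦ hg j hj x) hk]
  refine (hF.hasSum.sub (hasSum_sum fun k hk ↦ (hg_summable k hk).hasSum)).congr_fun fun x ↦ ?_
  linarith [hfg x]

/-- The semistandard fillings of the hook `(2,1)`: rows weakly increase, columns strictly. -/
@[ext]
structure Hook21 where
  corner : ℕ
  arm : ℕ
  leg : ℕ
  corner_pos : 0 < corner
  corner_le_arm : corner ≤ arm
  corner_lt_leg : corner < leg

/-- The pairs of `m ≥ 1` and a filling of the hook `(2,1)`, as quadruples `(m, a, b, c)` with
corner `a`, arm `b` and leg `c`. -/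
abbrev ShiftedFilling : Type :=
  {q : ℕ × ℕ × ℕ × ℕ // 0 < q.1 ∧ 0 < q.2.1 ∧ q.2.1 ≤ q.2.2.1 ∧ q.2.1 < q.2.2.2}

/-- The fillings of the skew shape obtained from the hook `(2,1)` by putting a box left of the leg,
as quadruples `(m, a, b, c)` where `m` is the entry of the new box. -/
abbrev SkewFilling : Type :=
  {q : ℕ × ℕ × ℕ × ℕ //
    0 < q.1 ∧ 0 < q.2.1 ∧ q.2.1 ≤ q.2.2.1 ∧ q.2.1 < q.2.2.2 ∧ q.1 ≤ q.2.2.2}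

/-- The fillings of the hook `(2,1,1)`, as quadruples `(m₁, m₂, m₃, b)` with column
`m₁ < m₂ < m₃` and arm `b`. -/
abbrev Hook211Filling : Type :=
  {q : ℕ × ℕ × ℕ × ℕ // 0 < q.1 ∧ q.1 < q.2.1 ∧ q.2.1 < q.2.2.1 ∧ q.1 ≤ q.2.2.2}

/-- `ζ_{(2,1),1}((s,r;t),(1))`, the hook series with corner and leg shifted by `m`. -/
noncomputable def shiftedZeta (s r t : ℕ) : ℝ :=
  ∑' q : ShiftedFilling,
    ((q.1.1 : ℝ) * ((q.1.1 + q.1.2.1 : ℕ) : ℝ) ^ s * (q.1.2.2.1 : ℝ) ^ r *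
      ((q.1.1 + q.1.2.2.2 : ℕ) : ℝ) ^ t)⁻¹

/-- `ζ_skew((s,r;1,t))`, with exponent `1` on the box left of the leg. -/
noncomputable def skewZeta (s r t : ℕ) : ℝ :=
  ∑' q : SkewFilling,
    ((q.1.1 : ℝ) * (q.1.2.1 : ℝ) ^ s * (q.1.2.2.1 : ℝ) ^ r * (q.1.2.2.2 : ℝ) ^ t)⁻¹

/-- `ζ_{(2,1,1)}(s₁,r;s₂;s₃)`, the extension of `hook211` to any exponent `r` of the arm. -/
noncomputable def hook211Zeta (s₁ r s₂ s₃ : ℕ) : ℝ :=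
  ∑' q : Hook211Filling,
    ((q.1.1 : ℝ) ^ s₁ * (q.1.2.2.2 : ℝ) ^ r * (q.1.2.1 : ℝ) ^ s₂ * (q.1.2.2.1 : ℝ) ^ s₃)⁻¹

theorem hook211_eq_hook211Zeta (s₁ s₂ s₃ : ℕ) : hook211 s₁ s₂ s₃ = hook211Zeta s₁ 2 s₂ s₃ := rfl

namespace Hook21

theorem arm_pos (h : Hook21) : 0 < h.arm := h.corner_pos.trans_le h.corner_le_arm

theorem leg_pos (h : Hook21) : 0 < h.leg := h.corner_pos.trans h.corner_lt_leg

/-- The encoding `(m, a, b, c)` of a filling together with `m ≥ 1`. -/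
def shiftedEquiv : Hook21 × ℕ+ ≃ ShiftedFilling where
  toFun p := ⟨(p.2, p.1.corner, p.1.arm, p.1.leg),
    p.2.pos, p.1.corner_pos, p.1.corner_le_arm, p.1.corner_lt_leg⟩
  invFun q := (⟨q.1.2.1, q.1.2.2.1, q.1.2.2.2, q.2.2.1, q.2.2.2.1, q.2.2.2.2⟩, ⟨q.1.1, q.2.1⟩)
  left_inv _ := rfl
  right_inv _ := rfl

/-- The encoding `(i + 1, a, b, c)`, with `i < c`, of the fillings of the skew shape. -/
def skewEquiv : (Σ h : Hook21, Fin h.leg) ≃ SkewFilling where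
  toFun p := ⟨(p.2 + 1, p.1.corner, p.1.arm, p.1.leg),
    p.2.succ_pos, p.1.corner_pos, p.1.corner_le_arm, p.1.corner_lt_leg, p.2.isLt⟩
  invFun q := ⟨⟨q.1.2.1, q.1.2.2.1, q.1.2.2.2, q.2.2.1, q.2.2.2.1, q.2.2.2.2.1⟩,
    ⟨q.1.1 - 1, (Nat.sub_one_lt_of_lt q.2.1).trans_le q.2.2.2.2.2⟩⟩
  right_inv q := Subtype.ext (Prod.ext (Nat.sub_add_cancel q.2.1) rfl)

/-- The bijection onto the fillings of `(2,1,1)` with column `a < m + a < m + c`. -/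
def shiftColumnEquiv : Hook21 × ℕ+ ≃ Hook211Filling where
  toFun p := ⟨(p.1.corner, p.2 + p.1.corner, p.2 + p.1.leg, p.1.arm),
    p.1.corner_pos, Nat.lt_add_of_pos_left p.2.pos, Nat.add_lt_add_left p.1.corner_lt_leg _,
    p.1.corner_le_arm⟩
  invFun q := (⟨q.1.1, q.1.2.2.2, q.1.2.2.1 - (q.1.2.1 - q.1.1), q.2.1, q.2.2.2.2,
    by have := q.2; omega⟩, ⟨q.1.2.1 - q.1.1, Nat.sub_pos_of_lt q.2.2.1⟩)
  left_inv := by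
    rintro ⟨h, m⟩
    refine Prod.ext ?_ (PNat.eq (Nat.add_sub_cancel ..))
    simp
  right_inv := by
    rintro ⟨⟨x, y, z, b⟩, -, hxy, hyz, -⟩
    dsimp only at hxy hyz
    simp only [PNat.mk_coe, Subtype.mk.injEq, Prod.mk.injEq, true_and, and_true]
    omega

/-- The bijection onto the fillings of `(2,1,1)` with column `a < c < m + c`. -/
def extendLegEquiv : Hook21 × ℕ+ ≃ Hook211Filling where
  toFun p := ⟨(p.1.corner, p.1.leg, p.2 + p.1.leg, p.1.arm),
    p.1.corner_pos, p.1.corner_lt_leg, Nat.lt_add_of_pos_left p.2.pos, p.1.corner_le_arm⟩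
  invFun q := (⟨q.1.1, q.1.2.2.2, q.1.2.1, q.2.1, q.2.2.2.2, q.2.2.1⟩,
    ⟨q.1.2.2.1 - q.1.2.1, Nat.sub_pos_of_lt q.2.2.2.1⟩)
  left_inv := by
    rintro ⟨h, m⟩
    refine Prod.ext ?_ (PNat.eq (Nat.add_sub_cancel ..))
    simp
  right_inv := by
    rintro ⟨⟨x, y, z, b⟩, -, -, hyz, -⟩
    dsimp only at hyz
    simp only [PNat.mk_coe, Subtype.mk.injEq, Prod.mk.injEq, true_and, and_true]
    omega

end Hook21

theorem shiftedZeta_eq_tsum (s r t : ℕ) :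
    shiftedZeta s r t = ∑' p : Hook21 × ℕ+,
      ((p.2 : ℝ) * (p.2 + p.1.corner) ^ s * p.1.arm ^ r * (p.2 + p.1.leg) ^ t)⁻¹ := by
  rw [shiftedZeta, ← Hook21.shiftedEquiv.tsum_eq]
  simp only [Nat.cast_add]
  rfl

theorem hook211Zeta_eq_tsum_shiftColumn (s₁ r s₂ s₃ : ℕ) :
    hook211Zeta s₁ r s₂ s₃ = ∑' p : Hook21 × ℕ+,
      ((p.1.corner : ℝ) ^ s₁ * p.1.arm ^ r * (p.2 + p.1.corner) ^ s₂ *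
        (p.2 + p.1.leg) ^ s₃)⁻¹ := by
  rw [hook211Zeta, ← Hook21.shiftColumnEquiv.tsum_eq]
  simp only [Hook21.shiftColumnEquiv, Equiv.coe_fn_mk, Nat.cast_add]

theorem hook211Zeta_eq_tsum_extendLeg (s₁ r s₂ s₃ : ℕ) :
    hook211Zeta s₁ r s₂ s₃ = ∑' p : Hook21 × ℕ+,
      ((p.1.corner : ℝ) ^ s₁ * p.1.arm ^ r * p.1.leg ^ s₂ * (p.2 + p.1.leg) ^ s₃)⁻¹ := by
  rw [hook211Zeta, ← Hook21.extendLegEquiv.tsum_eq]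
  simp only [Hook21.extendLegEquiv, Equiv.coe_fn_mk, Nat.cast_add]

/-- The term `1 / (m a^s b^r c^u (m + c)^v)` of the series interpolating between the skew value
(`v = 1`, after summation over `m`) and the shifted hook value (`u = 0`). -/
noncomputable def mixedTerm (s r u v : ℕ) (p : Hook21 × ℕ+) : ℝ :=
  ((p.2 : ℝ) * p.1.corner ^ s * p.1.arm ^ r * p.1.leg ^ u * (p.2 + p.1.leg) ^ v)⁻¹

theorem mixedTerm_nonneg (s r u v : ℕ) (p : Hook21 × ℕ+) : 0 ≤ mixedTerm s r u v p := by
  unfold mixedTerm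
  positivity

/-- The total degree `5` on the right is split evenly among the four variables. -/
theorem mul_mul_mul_rpow_le {a b c m : ℝ} (ha : 0 ≤ a) (hm : 0 ≤ m) (hab : a ≤ b)
    (hac : a ≤ c) : (m * a * b * c) ^ (5 / 4 : ℝ) ≤ m * b ^ 2 * c * (m + c) := by
  have hb : 0 ≤ b := ha.trans hab
  have hc : 0 ≤ c := ha.trans hac
  have hpow : (m * a * b * c) ^ 5 ≤ (m * b ^ 2 * c * (m + c)) ^ 4 :=
    calc
      (m * a * b * c) ^ 5 = m ^ 4 * b ^ 5 * c ^ 4 * (a ^ 3 * a ^ 2) * (m * c) := by ring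
      _ ≤ m ^ 4 * b ^ 5 * c ^ 4 * (b ^ 3 * c ^ 2) * ((m + c) * (m + c)) := by
        gcongr <;> linarith
      _ = m ^ 4 * b ^ 8 * c ^ 4 * (c ^ 2 * (m + c) ^ 2) := by ring
      _ ≤ m ^ 4 * b ^ 8 * c ^ 4 * ((m + c) ^ 2 * (m + c) ^ 2) := by
        gcongr
        linarith
      _ = (m * b ^ 2 * c * (m + c)) ^ 4 := by ring
  calc
    (m * a * b * c) ^ (5 / 4 : ℝ) = ((m * a * b * c) ^ 5) ^ (1 / 4 : ℝ) := by
      rw [← Real.rpow_natCast_mul (by positivity)]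
      norm_num
    _ ≤ ((m * b ^ 2 * c * (m + c)) ^ 4) ^ (1 / 4 : ℝ) := by gcongr
    _ = m * b ^ 2 * c * (m + c) := by
      rw [← Real.rpow_natCast_mul (by positivity)]
      norm_num

theorem mixedTerm_le_rpow_inv {r u v : ℕ} (s : ℕ) (hr : 2 ≤ r) (hu : 1 ≤ u) (hv : 1 ≤ v)
    (h : Hook21) (m : ℕ+) :
    mixedTerm s r u v (h, m) ≤ (((m : ℝ) * h.corner * h.arm * h.leg) ^ (5 / 4 : ℝ))⁻¹ := by
  have hm : (1 : ℝ) ≤ m := mod_cast m.pos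
  have ha : (1 : ℝ) ≤ h.corner := mod_cast h.corner_pos
  have hb : (1 : ℝ) ≤ h.arm := mod_cast h.arm_pos
  have hc : (1 : ℝ) ≤ h.leg := mod_cast h.leg_pos
  refine inv_anti₀ (by positivity) ?_
  calc
    ((m : ℝ) * h.corner * h.arm * h.leg) ^ (5 / 4 : ℝ)
    _ ≤ m * h.arm ^ 2 * h.leg * (m + h.leg) :=
      mul_mul_mul_rpow_le (by positivity) (by positivity) (mod_cast h.corner_le_arm)
        (mod_cast h.corner_lt_leg.le)
    _ = m * 1 * h.arm ^ 2 * h.leg ^ 1 * (m + h.leg) ^ 1 := by ring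
    _ ≤ m * h.corner ^ s * h.arm ^ r * h.leg ^ u * (m + h.leg) ^ v := by
      gcongr
      · exact one_le_pow₀ ha
      · linarith

theorem summable_mixedTerm {r u v : ℕ} (s : ℕ) (hr : 2 ≤ r) (hu : 1 ≤ u) (hv : 1 ≤ v) :
    Summable (mixedTerm s r u v) := by
  have hζ : Summable fun n : ℕ ↦ ((n : ℝ) ^ (5 / 4 : ℝ))⁻¹ :=
    Real.summable_nat_rpow_inv.2 (by norm_num)
  have hζ₂ := hζ.mul_of_nonneg hζ (fun _ ↦ by positivity) fun _ ↦ by positivity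
  have hζ₄ := hζ₂.mul_of_nonneg hζ₂ (fun _ ↦ by positivity) fun _ ↦ by positivity
  have hinj : Function.Injective fun p : Hook21 × ℕ+ ↦
      (((p.2 : ℕ), p.1.corner), p.1.arm, p.1.leg) := by
    rintro ⟨h, m⟩ ⟨h', m'⟩ hp
    simp only [Prod.mk.injEq, PNat.coe_inj] at hp
    exact Prod.ext (Hook21.ext hp.1.2 hp.2.1 hp.2.2) hp.1.1
  refine (hζ₄.comp_injective hinj).of_nonneg_of_le (mixedTerm_nonneg s r u v) ?_
  rintro ⟨h, m⟩
  refine (mixedTerm_le_rpow_inv s hr hu hv h m).trans_eq ?_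
  simp only [Function.comp_apply]
  rw [mul_assoc _ (h.arm : ℝ), Real.mul_rpow (by positivity) (by positivity),
    Real.mul_rpow (by positivity) (by positivity), Real.mul_rpow (by positivity) (by positivity)]
  simp only [mul_inv]

theorem hasSum_mixedTerm_fiber (s r u : ℕ) (h : Hook21) :
    HasSum (fun m ↦ mixedTerm s r u 1 (h, m))
      (∑ i : Fin h.leg,
        (((i : ℝ) + 1) * h.corner ^ s * h.arm ^ r * h.leg ^ (u + 1))⁻¹) := by
  have hterm (m : ℕ+) : mixedTerm s r u 1 (h, m) =
      ((h.corner : ℝ) ^ s * h.arm ^ r * h.leg ^ (u + 1))⁻¹ *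
        ((m : ℝ)⁻¹ - ((m : ℝ) + h.leg)⁻¹) := by
    have hm : (m : ℝ) ≠ 0 := mod_cast m.ne_zero
    have hc : (h.leg : ℝ) ≠ 0 := mod_cast h.leg_pos.ne'
    have hmc : (m : ℝ) + h.leg ≠ 0 := by positivity
    rw [inv_sub_inv hm hmc, add_sub_cancel_left, mixedTerm, pow_succ _ u]
    field_simp
  have hsum : ∑ i : Fin h.leg, (((i : ℝ) + 1) * h.corner ^ s * h.arm ^ r * h.leg ^ (u + 1))⁻¹ =
      ((h.corner : ℝ) ^ s * h.arm ^ r * h.leg ^ (u + 1))⁻¹ *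
        ∑ i ∈ range h.leg, ((i : ℝ) + 1)⁻¹ := by
    rw [← Fin.sum_univ_eq_sum_range (fun i ↦ ((i : ℝ) + 1)⁻¹), mul_sum]
    exact sum_congr rfl fun i _ ↦ by simp only [mul_inv]; ring
  rw [hsum]
  exact ((hasSum_inv_sub_inv_add h.leg).mul_left _).congr_fun hterm

theorem skewZeta_succ_eq_tsum_mixedTerm {r u : ℕ} (s : ℕ) (hr : 2 ≤ r) (hu : 1 ≤ u) :
    skewZeta s r (u + 1) = ∑' p, mixedTerm s r u 1 p := by
  have hmixed := summable_mixedTerm s hr hu le_rfl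
  have hfiber (h : Hook21) : ∑' m, mixedTerm s r u 1 (h, m) = ∑' i : Fin h.leg,
      (((i : ℝ) + 1) * h.corner ^ s * h.arm ^ r * h.leg ^ (u + 1))⁻¹ := by
    rw [(hasSum_mixedTerm_fiber s r u h).tsum_eq, tsum_fintype]
  have hskew : Summable fun p : Σ h : Hook21, Fin h.leg ↦
      (((p.2 : ℝ) + 1) * p.1.corner ^ s * p.1.arm ^ r * p.1.leg ^ (u + 1))⁻¹ :=
    (summable_sigma_of_nonneg fun _ ↦ by positivity).2
      ⟨fun _ ↦ Summable.of_finite, hmixed.prod.congr hfiber⟩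
  rw [skewZeta, ← Hook21.skewEquiv.tsum_eq, hmixed.tsum_prod, tsum_congr hfiber]
  simp only [Hook21.skewEquiv, Equiv.coe_fn_mk, Nat.cast_add, Nat.cast_one]
  exact hskew.tsum_sigma

theorem hasSum_mixedTerm_zero {r u : ℕ} (s : ℕ) (hr : 2 ≤ r) (hu : 1 ≤ u) :
    HasSum (mixedTerm s r 0 (u + 1))
      (skewZeta s r (u + 1) - ∑ j ∈ range u, hook211Zeta s r (u - j) (j + 2)) := by
  simp only [skewZeta_succ_eq_tsum_mixedTerm s hr hu, hook211Zeta_eq_tsum_extendLeg]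
  refine hasSum_tsum_sub_sum_tsum_of_nonneg (summable_mixedTerm s hr hu le_rfl)
    (mixedTerm_nonneg s r 0 (u + 1)) (fun _ _ _ ↦ by positivity) ?_
  rintro ⟨h, m⟩
  have hm : (m : ℝ) ≠ 0 := mod_cast m.ne_zero
  have hc : (h.leg : ℝ) ≠ 0 := mod_cast h.leg_pos.ne'
  calc
    _ = ((h.corner : ℝ) ^ s * h.arm ^ r * (m + h.leg))⁻¹ *
        (((m : ℝ) * (m + h.leg) ^ u)⁻¹ +
          ∑ j ∈ range u, ((h.leg : ℝ) ^ (u - j) * (m + h.leg) ^ (j + 1))⁻¹) := by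
      rw [mul_add, mul_sum, mixedTerm]
      congr 1
      · simp only [mul_inv, pow_succ]; ring
      · exact sum_congr rfl fun j _ ↦ by simp only [mul_inv, pow_succ]; ring
    _ = mixedTerm s r u 1 (h, m) := by
      rw [inv_mul_add_pow_add_sum hm hc (by positivity), mixedTerm]
      simp only [mul_inv]
      ring

theorem shiftedZeta_eq_tsum_mixedTerm_sub (s : ℕ) {r t : ℕ} (h : Summable (mixedTerm s r 0 t)) :
    shiftedZeta s r t = ∑' p, mixedTerm s r 0 t p -
      ∑ i ∈ range s, hook211Zeta (s - i) r (i + 1) t := by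
  simp only [shiftedZeta_eq_tsum, hook211Zeta_eq_tsum_shiftColumn]
  refine (hasSum_tsum_sub_sum_tsum_of_nonneg h (fun _ ↦ by positivity)
    (fun _ _ _ ↦ by positivity) ?_).tsum_eq
  rintro ⟨h, m⟩
  have hm : (m : ℝ) ≠ 0 := mod_cast m.ne_zero
  have ha : (h.corner : ℝ) ≠ 0 := mod_cast h.corner_pos.ne'
  calc
    _ = ((h.arm : ℝ) ^ r * (m + h.leg) ^ t)⁻¹ *
        (((m : ℝ) * (m + h.corner) ^ s)⁻¹ +
          ∑ i ∈ range s, ((h.corner : ℝ) ^ (s - i) * (m + h.corner) ^ (i + 1))⁻¹) := by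
      rw [mul_add, mul_sum]
      congr 1
      · simp only [mul_inv]; ring
      · exact sum_congr rfl fun i _ ↦ by simp only [mul_inv]; ring
    _ = mixedTerm s r 0 t (h, m) := by
      rw [inv_mul_add_pow_add_sum hm ha (by positivity), mixedTerm]
      simp only [mul_inv]
      ring

theorem telescoping_decomposition_general (s : ℕ) {r t : ℕ} (hr : 2 ≤ r) (ht : 2 ≤ t) :
    shiftedZeta s r t = skewZeta s r t - ∑ j ∈ range (t - 1), hook211Zeta s r (t - 1 - j) (j + 2) -
      ∑ i ∈ range s, hook211Zeta (s - i) r (i + 1) t := by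
  obtain ⟨u, rfl⟩ : ∃ u, t = u + 1 := ⟨t - 1, by omega⟩
  have hmixed := hasSum_mixedTerm_zero s hr (Nat.le_of_succ_le_succ ht)
  rw [shiftedZeta_eq_tsum_mixedTerm_sub s hmixed.summable, hmixed.tsum_eq, Nat.add_sub_cancel]

/-- Telescoping decomposition (Example 4.4, first identity):
`ζ_{(2,1),1}((3,2;2),(1)) = ζ_skew((3,2;1,2)) − 2ζ_{(2,1,1)}(3,2;1;2) − ζ_{(2,1,1)}(2,2;2;2)`
`− ζ_{(2,1,1)}(1,2;3;2)`, where
`ζ_{(2,1),1}((3,2;2),(1)) = Σ_{m ≥ 1, a ≤ b, a < c} 1/(m (m+a)³ b² (m+c)²)` and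
`ζ_skew((3,2;1,2)) = Σ_{m ≤ c, a ≤ b, a < c} 1/(m a³ b² c²)`. -/
theorem telescoping_decomposition :
    (∑' q : {q : ℕ × ℕ × ℕ × ℕ //
        0 < q.1 ∧ 0 < q.2.1 ∧ q.2.1 ≤ q.2.2.1 ∧ q.2.1 < q.2.2.2},
      ((q.1.1 : ℝ) * ((q.1.1 + q.1.2.1 : ℕ) : ℝ) ^ 3 * (q.1.2.2.1 : ℝ) ^ 2
          * ((q.1.1 + q.1.2.2.2 : ℕ) : ℝ) ^ 2)⁻¹) =
      (∑' q : {q : ℕ × ℕ × ℕ × ℕ //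
          0 < q.1 ∧ 0 < q.2.1 ∧ q.2.1 ≤ q.2.2.1 ∧ q.2.1 < q.2.2.2 ∧ q.1 ≤ q.2.2.2},
        ((q.1.1 : ℝ) * (q.1.2.1 : ℝ) ^ 3 * (q.1.2.2.1 : ℝ) ^ 2 * (q.1.2.2.2 : ℝ) ^ 2)⁻¹)
        - 2 * hook211 3 1 2 - hook211 2 2 2 - hook211 1 3 2 := by
  calc shiftedZeta 3 2 2
    _ = skewZeta 3 2 2 - hook211Zeta 3 2 1 2 -
        (hook211Zeta 3 2 1 2 + hook211Zeta 2 2 2 2 + hook211Zeta 1 2 3 2) := by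
      simpa [sum_range_succ] using telescoping_decomposition_general 3 (le_refl 2) (le_refl 2)
    _ = skewZeta 3 2 2 - 2 * hook211 3 1 2 - hook211 2 2 2 - hook211 1 3 2 := by
      simp only [hook211_eq_hook211Zeta]
      ring
end

section
/- For k₁ ≥ 1 and k₂, ℓ ≥ 2, the product of a double zeta value and a Riemann zeta value satisfies (Guo–Xie): ζ(k₁,k₂)·ζ(ℓ) = Σ_{i₁ ≥ 1, i₂ ≥ 2, i₁+i₂ = k₂+ℓ} C(i₂-1, ℓ-1)·ζ(k₁, i₁, i₂) + Σ_{i₁,i₂ ≥ 1, i₃ ≥ 2, i₁+i₂+i₃ = k₁+k₂+ℓ} C(i₃-1, k₂-1)·[C(i₂-1, k₁-i₁) + C(i₂-1, k₁-1)]·ζ(i₁, i₂, i₃), where ζ(a,b) = Σ_{1 ≤ n < m} n^{-a} m^{-b} and ζ(a,b,c) = Σ_{1 ≤ n < m < p} n^{-a} m^{-b} p^{-c}. -/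
/-- Riemann zeta value `ζ(s) = Σ_{n ≥ 1} n⁻ˢ`. -/
noncomputable def zetaVal (s : ℕ) : ℝ :=
  ∑' n : {n : ℕ // 0 < n}, (((n : ℕ) : ℝ) ^ s)⁻¹

/-- Double zeta value `ζ(a,b) = Σ_{0 < n < m} n⁻ᵃ m⁻ᵇ`. -/
noncomputable def mzv2 (a b : ℕ) : ℝ :=
  ∑' p : {p : ℕ × ℕ // 0 < p.1 ∧ p.1 < p.2},
    ((p.1.1 : ℝ) ^ a * (p.1.2 : ℝ) ^ b)⁻¹

/-- Triple zeta value `ζ(a,b,c) = Σ_{0 < n < m < p} n⁻ᵃ m⁻ᵇ p⁻ᶜ`. -/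
noncomputable def mzv3 (a b c : ℕ) : ℝ :=
  ∑' p : {p : ℕ × ℕ × ℕ // 0 < p.1 ∧ p.1 < p.2.1 ∧ p.2.1 < p.2.2},
    ((p.1.1 : ℝ) ^ a * (p.1.2.1 : ℝ) ^ b * (p.1.2.2 : ℝ) ^ c)⁻¹

/-!
In terms of the gaps between consecutive summation variables, iterating the identity
`x⁻¹ * y⁻¹ = (x + y)⁻¹ * (x⁻¹ + y⁻¹)` expands a product `x^(-k) * y^(-l)` into partial fractions.
Applied to `m^(-k₂) * q^(-l)` in `ζ(k₁, k₂) * ζ(l) = ∑ n^(-k₁) * m^(-k₂) * q^(-l)`, this turns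
the powers of `m` into triple zeta values, and the powers of `q` into sums in which `n` and `q` are
still independent. A second expansion, of the powers of `n` and `q`, gives triple zeta values again,
now with both orders of `n` and `q` occurring.

In `ℝ≥0∞` all rearrangements are free, so convergence matters only for the passage to `ℝ`. There
it follows from the telescoping bound `∑ y, (x + y)⁻² ≤ x⁻¹`, which gives `ζ(k₁, k₂) ≤ ζ(2)`.
-/

open Finset
open scoped ENNReal

section PartialFractions

variable {R : Type*} [CommSemiring R]

/-- The half of the partial fraction expansion of `X ^ (K + 1) * Y ^ (L + 1)` that carries the
powers of `X`, for inverses `X = x⁻¹`, `Y = y⁻¹` and `S = (x + y)⁻¹`. All exponents are shifted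
by one, so that the terms are indexed by `antidiagonal (K + L)`. -/
def partialFractionHalf (X S : R) (K L : ℕ) : R :=
  ∑ p ∈ antidiagonal (K + L), (p.2.choose L : R) * (X ^ (p.1 + 1) * S ^ (p.2 + 1))

lemma partialFractionHalf_zero_zero (X S : R) : partialFractionHalf X S 0 0 = X * S := by
  simp [partialFractionHalf]

lemma partialFractionHalf_zero_succ (X S : R) (L : ℕ) :
    partialFractionHalf X S 0 (L + 1) = S * partialFractionHalf X S 0 L := by
  simp only [partialFractionHalf, ← add_assoc, Nat.sum_antidiagonal_succ', mul_sum,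
    Nat.choose_zero_succ, Nat.cast_zero, zero_mul, zero_add]
  refine sum_congr rfl fun p hp => ?_
  have h : p.2 < L + 1 := Nat.lt_succ_of_le (HasAntidiagonal.antidiagonal.snd_le hp)
  rw [Nat.choose_succ_succ, Nat.choose_eq_zero_of_lt h, add_zero]
  ring

lemma partialFractionHalf_succ_zero (X S : R) (K : ℕ) :
    partialFractionHalf X S (K + 1) 0 = S * (X ^ (K + 2) + partialFractionHalf X S K 0) := by
  simp only [partialFractionHalf, add_zero, Nat.sum_antidiagonal_succ', mul_add, mul_sum,
    Nat.choose_zero_right, Nat.cast_one, one_mul, zero_add, pow_one]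
  exact congrArg₂ _ (by ring) (sum_congr rfl fun p _ => by ring)

lemma partialFractionHalf_succ_succ (X S : R) (K L : ℕ) :
    partialFractionHalf X S (K + 1) (L + 1) =
      S * (partialFractionHalf X S K (L + 1) + partialFractionHalf X S (K + 1) L) := by
  have hKL : K + 1 + (L + 1) = K + L + 1 + 1 := by ring
  have hK : K + (L + 1) = K + L + 1 := by ring
  have hL : K + 1 + L = K + L + 1 := by ring
  simp only [partialFractionHalf, hKL, hK, hL]
  rw [Nat.sum_antidiagonal_succ', ← sum_add_distrib, mul_sum, Nat.choose_zero_succ, Nat.cast_zero,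
    zero_mul, zero_add]
  refine sum_congr rfl fun p _ => ?_
  rw [Nat.choose_succ_succ, Nat.cast_add]
  ring

lemma pow_succ_mul_pow_succ_of_mul_eq {X Y S : R} (h : X * Y = S * (X + Y)) (m n : ℕ) :
    X ^ (m + 1) * Y ^ (n + 1) = S * (X ^ m * Y ^ (n + 1) + X ^ (m + 1) * Y ^ n) := by
  calc X ^ (m + 1) * Y ^ (n + 1) = X ^ m * Y ^ n * (X * Y) := by ring
    _ = S * (X ^ m * Y ^ (n + 1) + X ^ (m + 1) * Y ^ n) := by rw [h]; ring

theorem pow_mul_pow_eq_partialFractionHalf_add {X Y S : R} (h : X * Y = S * (X + Y)) (K L : ℕ) :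
    X ^ (K + 1) * Y ^ (L + 1) = partialFractionHalf X S K L + partialFractionHalf Y S L K := by
  induction K generalizing L with
  | zero =>
    induction L with
    | zero => simp only [partialFractionHalf_zero_zero, zero_add, pow_one, h]; ring
    | succ L ihL =>
      rw [pow_succ_mul_pow_succ_of_mul_eq h, ihL, partialFractionHalf_zero_succ,
        partialFractionHalf_succ_zero]
      ring
  | succ K ihK =>
    rw [pow_succ_mul_pow_succ_of_mul_eq h, ihK]
    induction L with
    | zero =>
      rw [partialFractionHalf_zero_succ, partialFractionHalf_succ_zero]
      ring
    | succ L ihL =>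
      rw [pow_succ_mul_pow_succ_of_mul_eq h, ihK, ihL, partialFractionHalf_succ_succ,
        partialFractionHalf_succ_succ]
      ring

end PartialFractions

section Reindexing

variable {A : Type*} [AddCommMonoid A]

lemma sum_Icc_one_eq_sum_antidiagonal {n : ℕ} (f : ℕ → ℕ → A) (hf : ∀ i, f i 1 = 0) :
    ∑ i ∈ Icc 1 n, f i (n + 2 - i) = ∑ p ∈ antidiagonal n, f (p.1 + 1) (p.2 + 1) := by
  rw [Nat.sum_antidiagonal_eq_sum_range_succ_mk, sum_range_succ, Nat.sub_self, hf, add_zero,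
    ← Ico_add_one_right_eq_Icc, ← zero_add 1, ← sum_Ico_add', ← range_eq_Ico]
  refine sum_congr rfl fun i hi => ?_
  have hsub : n + 2 - (i + 1) = n - i + 1 := by have := mem_range.1 hi; omega
  rw [zero_add, hsub]

lemma sum_Icc_sum_Icc_eq_sum_antidiagonal {M n : ℕ} (f : ℕ → ℕ → ℕ → A)
    (hf : ∀ i j, f i j 1 = 0) (hfM : ∀ i j k, 1 ≤ i → 1 ≤ j → i + j ≤ M + 1 → f i j k = 0) :
    ∑ i ∈ Icc 1 (M + n + 3), ∑ j ∈ Icc 1 (M + n + 3),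
        (if 2 ≤ M + n + 3 - i - j then f i j (M + n + 3 - i - j) else 0) =
      ∑ p ∈ antidiagonal n, ∑ w ∈ antidiagonal (M + p.1), f (w.1 + 1) (w.2 + 1) (p.2 + 1) := by
  rw [← sum_product', sum_sigma']
  symm
  refine sum_of_injOn (fun x => (x.2.1 + 1, x.2.2 + 1)) ?_ ?_ ?_ ?_
  · rintro ⟨⟨p, r⟩, u, v⟩ hx ⟨⟨p', r'⟩, u', v'⟩ hy hxy
    simp only [mem_coe, mem_sigma, HasAntidiagonal.mem_antidiagonal, Prod.mk.injEq] at hx hy hxy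
    obtain ⟨rfl, rfl, rfl, rfl⟩ : p = p' ∧ r = r' ∧ u = u' ∧ v = v' := by omega
    rfl
  · rintro ⟨⟨p, r⟩, u, v⟩ hx
    simp only [mem_coe, mem_sigma, HasAntidiagonal.mem_antidiagonal, mem_product, mem_Icc] at hx ⊢
    omega
  · rintro ⟨i, j⟩ hij hnot
    rw [mem_product, mem_Icc, mem_Icc] at hij
    refine ite_eq_right_iff.2 fun hN => hfM i j _ hij.1.1 hij.2.1 ?_
    by_contra! hM
    refine hnot ⟨⟨(i + j - (M + 2), M + n + 2 - i - j), i - 1, j - 1⟩, ?_, ?_⟩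
    · simp only [mem_coe, mem_sigma, HasAntidiagonal.mem_antidiagonal]
      omega
    · simp only [Prod.mk.injEq]
      omega
  · rintro ⟨⟨p, r⟩, u, v⟩ hx
    simp only [mem_sigma, HasAntidiagonal.mem_antidiagonal] at hx
    have hr : M + n + 3 - (u + 1) - (v + 1) = r + 1 := by omega
    rw [hr]
    rcases r with _ | r
    · rw [hf, ite_self]
    · rw [if_pos (by omega)]

end Reindexing

lemma inv_mul_inv_eq_inv_add_mul (x y : ℝ≥0∞) : x⁻¹ * y⁻¹ = (x + y)⁻¹ * (x⁻¹ + y⁻¹) := by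
  rcases eq_or_ne x ∞ with rfl | hx
  · simp
  rcases eq_or_ne y ∞ with rfl | hy
  · simp
  rcases eq_or_ne x 0 with rfl | hx₀
  · simp [ENNReal.top_mul, hy]
  rcases eq_or_ne y 0 with rfl | hy₀
  · simp [ENNReal.mul_top, hx]
  have hsum : x⁻¹ + y⁻¹ = (x + y) * (x⁻¹ * y⁻¹) := by
    calc x⁻¹ + y⁻¹ = x⁻¹ * (y * y⁻¹) + x * x⁻¹ * y⁻¹ := by
          rw [ENNReal.mul_inv_cancel hx₀ hx, ENNReal.mul_inv_cancel hy₀ hy, mul_one, one_mul]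
      _ = (x + y) * (x⁻¹ * y⁻¹) := by ring
  rw [hsum, ← mul_assoc, ENNReal.inv_mul_cancel (by simp [hx₀]) (by simp [hx, hy]), one_mul]

lemma inv_add_one_sq_add_inv_add_one_le (x : ℝ≥0∞) : (x + 1)⁻¹ ^ 2 + (x + 1)⁻¹ ≤ x⁻¹ := by
  calc (x + 1)⁻¹ ^ 2 + (x + 1)⁻¹ = (x + 1)⁻¹ * ((x + 1)⁻¹ + 1⁻¹) := by rw [inv_one]; ring
    _ ≤ (x + 1)⁻¹ * (x⁻¹ + 1⁻¹) := by gcongr; exact le_self_add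
    _ = x⁻¹ := by rw [← inv_mul_inv_eq_inv_add_mul, inv_one, mul_one]

lemma sum_range_inv_add_sq_add_inv_le (x : ℝ≥0∞) (n : ℕ) :
    ∑ i ∈ range n, (x + (i + 1 : ℕ))⁻¹ ^ 2 + (x + n)⁻¹ ≤ x⁻¹ := by
  induction n with
  | zero => simp
  | succ n ih =>
    refine le_trans ?_ ih
    rw [sum_range_succ, add_assoc, Nat.cast_succ, ← add_assoc x]
    gcongr
    exact inv_add_one_sq_add_inv_add_one_le (x + n)

lemma tsum_inv_add_sq_le (x : ℝ≥0∞) : ∑' y : ℕ+, (x + y)⁻¹ ^ 2 ≤ x⁻¹ := by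
  rw [tsum_pnat_eq_tsum_succ (f := fun y : ℕ => (x + y)⁻¹ ^ 2)]
  exact ENNReal.tsum_le_of_sum_range_le fun n =>
    le_self_add.trans (sum_range_inv_add_sq_add_inv_le x n)

/-- Riemann zeta value in `ℝ≥0∞`. -/
noncomputable def ezeta (s : ℕ) : ℝ≥0∞ :=
  ∑' n : ℕ+, (n : ℝ≥0∞)⁻¹ ^ s

/-- Double zeta value in `ℝ≥0∞`, summed over the gaps `x = n` and `y = m - n`. -/
noncomputable def emzv2 (a b : ℕ) : ℝ≥0∞ :=
  ∑' (x : ℕ+) (y : ℕ+), (x : ℝ≥0∞)⁻¹ ^ a * ((x : ℝ≥0∞) + y)⁻¹ ^ b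

/-- The summand of the triple zeta value in terms of the gaps `x = n`, `y = m - n`, `z = p - m`. -/
noncomputable def mzv3Summand (a b c : ℕ) (x y z : ℕ+) : ℝ≥0∞ :=
  (x : ℝ≥0∞)⁻¹ ^ a * ((x : ℝ≥0∞) + y)⁻¹ ^ b * ((x : ℝ≥0∞) + y + z)⁻¹ ^ c

/-- Triple zeta value in `ℝ≥0∞`, summed over the gaps. -/
noncomputable def emzv3 (a b c : ℕ) : ℝ≥0∞ :=
  ∑' (x : ℕ+) (y : ℕ+) (z : ℕ+), mzv3Summand a b c x y z

/-- The summand of `mordellTornheim`. -/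
noncomputable def mordellTornheimSummand (a b c : ℕ) (x y z : ℕ+) : ℝ≥0∞ :=
  (x : ℝ≥0∞)⁻¹ ^ a * (y : ℝ≥0∞)⁻¹ ^ b * ((x : ℝ≥0∞) + y + z)⁻¹ ^ c

/-- The Mordell–Tornheim triple zeta value `T(a, b, 0; c)` in `ℝ≥0∞`. It interpolates between the
product of zeta values, where two variables are independent, and the nested triple sums. -/
noncomputable def mordellTornheim (a b c : ℕ) : ℝ≥0∞ :=
  ∑' (x : ℕ+) (y : ℕ+) (z : ℕ+), mordellTornheimSummand a b c x y z

lemma mordellTornheimSummand_succ_succ (M N c : ℕ) (x y z : ℕ+) :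
    mordellTornheimSummand (M + 1) (N + 1) c x y z = ∑ w ∈ antidiagonal (M + N),
      ((w.2.choose N : ℝ≥0∞) * mzv3Summand (w.1 + 1) (w.2 + 1) c x y z +
        (w.2.choose M : ℝ≥0∞) * mzv3Summand (w.1 + 1) (w.2 + 1) c y x z) := by
  rw [mordellTornheimSummand,
    pow_mul_pow_eq_partialFractionHalf_add (inv_mul_inv_eq_inv_add_mul _ _),
    partialFractionHalf, partialFractionHalf, add_comm N M, ← sum_add_distrib, sum_mul]
  simp only [mzv3Summand, add_comm (y : ℝ≥0∞) x, add_mul, mul_assoc]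

lemma emzv3_eq_tsum_swap (a b c : ℕ) :
    emzv3 a b c = ∑' (x : ℕ+) (y : ℕ+) (z : ℕ+), mzv3Summand a b c y x z :=
  ENNReal.tsum_comm

theorem mordellTornheim_succ_succ (M N c : ℕ) :
    mordellTornheim (M + 1) (N + 1) c = ∑ w ∈ antidiagonal (M + N),
      (w.2.choose N + w.2.choose M : ℝ≥0∞) * emzv3 (w.1 + 1) (w.2 + 1) c := by
  simp_rw [mordellTornheim, mordellTornheimSummand_succ_succ,
    Summable.tsum_finsetSum fun _ _ => ENNReal.summable, ENNReal.tsum_add, ENNReal.tsum_mul_left,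
    ← emzv3_eq_tsum_swap, add_mul]
  rfl

lemma emzv2_summand_mul_ezeta_summand (a K L : ℕ) (x y z : ℕ+) :
    (x : ℝ≥0∞)⁻¹ ^ a * ((x : ℝ≥0∞) + y)⁻¹ ^ (K + 1) * (z : ℝ≥0∞)⁻¹ ^ (L + 1) =
      ∑ p ∈ antidiagonal (K + L), (p.2.choose L : ℝ≥0∞) *
          mzv3Summand a (p.1 + 1) (p.2 + 1) x y z +
        ∑ p ∈ antidiagonal (K + L), (p.2.choose K : ℝ≥0∞) *
          mordellTornheimSummand a (p.1 + 1) (p.2 + 1) x z y := by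
  rw [mul_assoc, pow_mul_pow_eq_partialFractionHalf_add (inv_mul_inv_eq_inv_add_mul _ _),
    partialFractionHalf, partialFractionHalf, add_comm L K, mul_add, mul_sum, mul_sum]
  simp only [mzv3Summand, mordellTornheimSummand, add_right_comm (x : ℝ≥0∞) z y, mul_assoc,
    mul_left_comm ((x : ℝ≥0∞)⁻¹ ^ a)]

lemma mordellTornheim_eq_tsum_swap (a b c : ℕ) :
    mordellTornheim a b c =
      ∑' (x : ℕ+) (y : ℕ+) (z : ℕ+), mordellTornheimSummand a b c x z y :=
  tsum_congr fun _ => ENNReal.tsum_comm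

theorem emzv2_mul_ezeta (a K L : ℕ) :
    emzv2 a (K + 1) * ezeta (L + 1) =
      ∑ p ∈ antidiagonal (K + L), (p.2.choose L : ℝ≥0∞) * emzv3 a (p.1 + 1) (p.2 + 1) +
        ∑ p ∈ antidiagonal (K + L),
          (p.2.choose K : ℝ≥0∞) * mordellTornheim a (p.1 + 1) (p.2 + 1) := by
  simp_rw [emzv2, ezeta, ← ENNReal.tsum_mul_right, ← ENNReal.tsum_mul_left,
    emzv2_summand_mul_ezeta_summand, ENNReal.tsum_add,
    Summable.tsum_finsetSum fun _ _ => ENNReal.summable, ENNReal.tsum_mul_left,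
    ← mordellTornheim_eq_tsum_swap]
  rfl

lemma ezeta_ne_top {s : ℕ} (hs : 2 ≤ s) : ezeta s ≠ ∞ := by
  have hsum : Summable fun n : ℕ+ => ((n : ℝ) ^ s)⁻¹ :=
    (Real.summable_nat_pow_inv.2 hs).comp_injective PNat.coe_injective
  have hterm : ∀ n : ℕ+, (n : ℝ≥0∞)⁻¹ ^ s = ENNReal.ofReal ((n : ℝ) ^ s)⁻¹ := fun n => by
    rw [ENNReal.ofReal_inv_of_pos (by positivity), ENNReal.ofReal_pow (by positivity),
      ENNReal.ofReal_natCast, ENNReal.inv_pow]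
  simpa only [ezeta, hterm] using hsum.tsum_ofReal_ne_top

lemma emzv2_ne_top {a b : ℕ} (ha : 1 ≤ a) (hb : 2 ≤ b) : emzv2 a b ≠ ∞ := by
  have hinv_le_one : ∀ x : ℕ+, (x : ℝ≥0∞)⁻¹ ≤ 1 := fun x =>
    ENNReal.inv_le_one.2 (mod_cast one_le)
  refine ne_top_of_le_ne_top (ezeta_ne_top le_rfl) ?_
  calc emzv2 a b ≤ ∑' (x : ℕ+) (y : ℕ+), (x : ℝ≥0∞)⁻¹ ^ 1 * ((x : ℝ≥0∞) + y)⁻¹ ^ 2 := by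
        refine ENNReal.tsum_le_tsum fun x => ENNReal.tsum_le_tsum fun y => ?_
        refine mul_le_mul' ?_ ?_
        · exact pow_le_pow_right_of_le_one' (hinv_le_one x) ha
        · refine pow_le_pow_right_of_le_one' ?_ hb
          simpa using hinv_le_one (x + y)
    _ ≤ ∑' x : ℕ+, (x : ℝ≥0∞)⁻¹ * (x : ℝ≥0∞)⁻¹ := by
        simp_rw [ENNReal.tsum_mul_left, pow_one]
        gcongr with x
        exact tsum_inv_add_sq_le x
    _ = ezeta 2 := by simp only [ezeta, sq]

/-- Strictly increasing pairs of positive integers are determined by their gaps. -/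
def gapsEquivPair : ℕ+ × ℕ+ ≃ {p : ℕ × ℕ // 0 < p.1 ∧ p.1 < p.2} where
  toFun p := ⟨(p.1, p.1 + p.2), p.1.pos, Nat.lt_add_of_pos_right p.2.pos⟩
  invFun p := (⟨p.1.1, p.2.1⟩, ⟨p.1.2 - p.1.1, Nat.sub_pos_of_lt p.2.2⟩)
  left_inv p := by
    refine Prod.ext (PNat.eq ?_) (PNat.eq ?_) <;> simp
  right_inv p := by
    obtain ⟨⟨n, m⟩, hn, hnm⟩ := p
    simpa using Nat.add_sub_of_le hnm.le

/-- Strictly increasing triples of positive integers are determined by their gaps. -/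
def gapsEquivTriple :
    ℕ+ × ℕ+ × ℕ+ ≃ {p : ℕ × ℕ × ℕ // 0 < p.1 ∧ p.1 < p.2.1 ∧ p.2.1 < p.2.2} where
  toFun p := ⟨(p.1, p.1 + p.2.1, p.1 + p.2.1 + p.2.2), p.1.pos,
    Nat.lt_add_of_pos_right p.2.1.pos, Nat.lt_add_of_pos_right p.2.2.pos⟩
  invFun p := (⟨p.1.1, p.2.1⟩, ⟨p.1.2.1 - p.1.1, Nat.sub_pos_of_lt p.2.2.1⟩,
    ⟨p.1.2.2 - p.1.2.1, Nat.sub_pos_of_lt p.2.2.2⟩)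
  left_inv p := by
    refine Prod.ext (PNat.eq ?_) (Prod.ext (PNat.eq ?_) (PNat.eq ?_)) <;> simp
  right_inv p := by
    obtain ⟨⟨n, m, k⟩, hn, hnm, hmk⟩ := p
    simp only at hnm hmk
    simp only [Subtype.mk.injEq, Prod.mk.injEq, PNat.mk_coe, true_and]
    omega

lemma zetaVal_eq_toReal (s : ℕ) : zetaVal s = (ezeta s).toReal := by
  rw [ezeta, ENNReal.tsum_toReal_eq fun n => by simp, zetaVal]
  refine tsum_congr fun n => ?_
  simp only [ENNReal.toReal_pow, ENNReal.toReal_inv, ENNReal.toReal_natCast, inv_pow]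
  rfl

lemma mzv2_eq_toReal (a b : ℕ) : mzv2 a b = (emzv2 a b).toReal := by
  rw [emzv2, ← ENNReal.tsum_prod, ENNReal.tsum_toReal_eq fun p => by finiteness, mzv2,
    ← gapsEquivPair.tsum_eq]
  refine tsum_congr fun p => ?_
  simp [gapsEquivPair, ENNReal.toReal_add, mul_comm]

lemma mzv3_eq_toReal (a b c : ℕ) : mzv3 a b c = (emzv3 a b c).toReal := by
  simp_rw [emzv3, ← ENNReal.tsum_prod]
  rw [ENNReal.tsum_toReal_eq fun p => by unfold mzv3Summand; finiteness, mzv3,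
    ← gapsEquivTriple.tsum_eq]
  refine tsum_congr fun p => ?_
  simp [gapsEquivTriple, mzv3Summand, ENNReal.toReal_add, mul_comm]

theorem mzv2_mul_zetaVal {M K L : ℕ} (hK : 1 ≤ K) (hL : 1 ≤ L) :
    mzv2 (M + 1) (K + 1) * zetaVal (L + 1) =
      ∑ p ∈ antidiagonal (K + L), (p.2.choose L : ℝ) * mzv3 (M + 1) (p.1 + 1) (p.2 + 1) +
        ∑ p ∈ antidiagonal (K + L), ∑ w ∈ antidiagonal (M + p.1),
          (p.2.choose K : ℝ) * ((w.2.choose p.1 : ℝ) + (w.2.choose M : ℝ)) *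
            mzv3 (w.1 + 1) (w.2 + 1) (p.2 + 1) := by
  have hfin : emzv2 (M + 1) (K + 1) * ezeta (L + 1) ≠ ∞ :=
    ENNReal.mul_ne_top (emzv2_ne_top (by omega) (by omega)) (ezeta_ne_top (by omega))
  have hprod := emzv2_mul_ezeta (M + 1) K L
  simp_rw [mordellTornheim_succ_succ, mul_sum, ← mul_assoc] at hprod
  rw [hprod] at hfin
  obtain ⟨hfin₁, hfin₂⟩ := ENNReal.add_ne_top.1 hfin
  have hfin₃ := ENNReal.sum_ne_top.1 hfin₂
  rw [mzv2_eq_toReal, zetaVal_eq_toReal, ← ENNReal.toReal_mul, hprod,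
    ENNReal.toReal_add hfin₁ hfin₂, ENNReal.toReal_sum (ENNReal.sum_ne_top.1 hfin₁),
    ENNReal.toReal_sum hfin₃]
  congr 1
  · simp only [ENNReal.toReal_mul, ENNReal.toReal_natCast, mzv3_eq_toReal]
  · refine sum_congr rfl fun p hp => ?_
    rw [ENNReal.toReal_sum (ENNReal.sum_ne_top.1 (hfin₃ p hp))]
    simp [ENNReal.toReal_mul, ENNReal.toReal_add, mzv3_eq_toReal]

/-- The coefficient of `ζ(i₁, i₂, i₃)` in the second sum of the Guo–Xie formula. The binomial
coefficient `C(i₂ - 1, k₁ - i₁)` has to be cut off by hand where `k₁ - i₁` is negative. -/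
def guoXieCoeff (k₁ k₂ i₁ i₂ i₃ : ℕ) : ℝ :=
  ((i₃ - 1).choose (k₂ - 1) : ℝ) *
    ((if i₁ ≤ k₁ then ((i₂ - 1).choose (k₁ - i₁) : ℝ) else 0) + ((i₂ - 1).choose (k₁ - 1) : ℝ))

lemma guoXieCoeff_one_right {k₂ : ℕ} (h₂ : 2 ≤ k₂) (k₁ i₁ i₂ : ℕ) :
    guoXieCoeff k₁ k₂ i₁ i₂ 1 = 0 := by
  rw [guoXieCoeff, Nat.choose_eq_zero_of_lt (by omega), Nat.cast_zero, zero_mul]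

lemma guoXieCoeff_eq_zero_of_add_le {k₁ i₁ i₂ : ℕ} (hi₁ : 1 ≤ i₁) (hi₂ : 1 ≤ i₂)
    (h : i₁ + i₂ ≤ k₁) (k₂ i₃ : ℕ) : guoXieCoeff k₁ k₂ i₁ i₂ i₃ = 0 := by
  rw [guoXieCoeff, Nat.choose_eq_zero_of_lt (show i₂ - 1 < k₁ - i₁ by omega),
    Nat.choose_eq_zero_of_lt (show i₂ - 1 < k₁ - 1 by omega), Nat.cast_zero, ite_self, add_zero,
    mul_zero]

lemma guoXieCoeff_succ {M p u v : ℕ} (h : u + v = M + p) (K r : ℕ) :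
    guoXieCoeff (M + 1) (K + 1) (u + 1) (v + 1) (r + 1) =
      (r.choose K : ℝ) * ((v.choose p : ℝ) + (v.choose M : ℝ)) := by
  have hchoose : (if u ≤ M then (v.choose (M - u) : ℝ) else 0) = v.choose p := by
    split_ifs with hu
    · rw [Nat.choose_symm_of_eq_add (show v = p + (M - u) by omega)]
    · rw [Nat.choose_eq_zero_of_lt (show v < p by omega), Nat.cast_zero]
  simp only [guoXieCoeff, Nat.add_sub_cancel, Nat.add_sub_add_right, add_le_add_iff_right, hchoose]

/-- Guo–Xie: for `k₁ ≥ 1`, `k₂, ℓ ≥ 2`,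
`ζ(k₁,k₂)·ζ(ℓ) = Σ_{i₁≥1, i₂≥2, i₁+i₂=k₂+ℓ} C(i₂-1, ℓ-1)·ζ(k₁, i₁, i₂)`
`+ Σ_{i₁,i₂≥1, i₃≥2, i₁+i₂+i₃=k₁+k₂+ℓ} C(i₃-1, k₂-1)·[C(i₂-1, k₁-i₁) + C(i₂-1, k₁-1)]·ζ(i₁,i₂,i₃)`
(with `C(n,r) = 0` when `r < 0`). -/
theorem guo_xie (k₁ k₂ l : ℕ) (h₁ : 1 ≤ k₁) (h₂ : 2 ≤ k₂) (hl : 2 ≤ l) :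
    mzv2 k₁ k₂ * zetaVal l =
      (∑ i₁ ∈ Finset.Icc 1 (k₂ + l - 2),
        (Nat.choose (k₂ + l - i₁ - 1) (l - 1) : ℝ) * mzv3 k₁ i₁ (k₂ + l - i₁))
      + ∑ i₁ ∈ Finset.Icc 1 (k₁ + k₂ + l), ∑ i₂ ∈ Finset.Icc 1 (k₁ + k₂ + l),
          if 2 ≤ k₁ + k₂ + l - i₁ - i₂ then
            (Nat.choose (k₁ + k₂ + l - i₁ - i₂ - 1) (k₂ - 1) : ℝ)
              * ((if i₁ ≤ k₁ then (Nat.choose (i₂ - 1) (k₁ - i₁) : ℝ) else 0)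
                  + (Nat.choose (i₂ - 1) (k₁ - 1) : ℝ))
              * mzv3 i₁ i₂ (k₁ + k₂ + l - i₁ - i₂)
          else 0 := by
  obtain ⟨M, rfl⟩ := Nat.exists_eq_add_of_le' h₁
  obtain ⟨K, rfl⟩ := Nat.exists_eq_add_of_le' (one_le_two.trans h₂)
  obtain ⟨L, rfl⟩ := Nat.exists_eq_add_of_le' (one_le_two.trans hl)
  have hK : 1 ≤ K := by omega
  have hL : 1 ≤ L := by omega
  have hweight₂ : K + 1 + (L + 1) = K + L + 2 := by ring
  have hweight₃ : M + 1 + (K + 1) + (L + 1) = M + (K + L) + 3 := by ring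
  rw [mzv2_mul_zetaVal hK hL, hweight₂, hweight₃, Nat.add_sub_cancel]
  congr 1
  · refine (sum_Icc_one_eq_sum_antidiagonal
      (fun i j => ((j - 1).choose L : ℝ) * mzv3 (M + 1) i j) fun i => ?_).symm
    rw [Nat.choose_eq_zero_of_lt hL, Nat.cast_zero, zero_mul]
  · refine Eq.trans ?_ (sum_Icc_sum_Icc_eq_sum_antidiagonal
      (fun i j k => guoXieCoeff (M + 1) (K + 1) i j k * mzv3 i j k)
      (fun i j => ?_) fun i j k hi hj hij => ?_).symm
    · refine sum_congr rfl fun p _ => sum_congr rfl fun w hw => ?_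
      rw [guoXieCoeff_succ (HasAntidiagonal.mem_antidiagonal.1 hw)]
    · rw [guoXieCoeff_one_right h₂, zero_mul]
    · rw [guoXieCoeff_eq_zero_of_add_le hi hj hij, zero_mul]
end
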